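/- Let 𝒜 = {H₁,…,Hₙ} be an indecomposable real central arrangement with n = |𝒜| ≥ 3, m a positive integer, and Φ : Ch^m → Ch an admissible map with associated family φⱼ^σ (1 ≤ j ≤ n, σ ∈ B). Then the maps φⱼ^σ do not depend on j or on σ: φ_{j₁}^{σ₁} = φ_{j₂}^{σ₂} for all 1 ≤ j₁, j₂ ≤ n and all σ₁, σ₂ ∈ B. -/

import Mathlib

/-!
Restrict attention to a circuit of the arrangement, that is, to the support `S` of a linear relation
`∑ cᵢ αᵢ = 0` of minimal support. Since this is essentially the only relation on `S`, the sign
vectors `(εᵢ^{sgn cᵢ}(C))_{i ∈ S}` of chambers are exactly the nonconstant elements of `B^S`.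
Admissibility therefore says that the maps `gᵢ = φᵢ^{sgn cᵢ}`, applied to the rows of a matrix with
nonconstant columns, give a nonconstant column. Taking the row `x` at `j`, the row `-x` at `k` and
the constant row `gⱼ(x)` elsewhere shows `gₖ(-x) = -gⱼ(x)`. Distinct hyperplanes have independent
forms, so `S` has a third element, and comparing through it shows that all `gᵢ` coincide and are
odd. As `φᵢ^{-σ}(x) = -φᵢ^σ(-x)`, oddness removes the dependence on the sign.

Every linear relation is a combination of relations of minimal support. If each circuit were
contained in `T` or in its complement, the spans of the two families of forms would therefore meet
trivially and the ranks would add up. So in an indecomposable arrangement some circuit crosses any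
given partition, and the equality of the maps spreads to all indices.
-/

noncomputable section
attribute [local instance] Classical.propDecidable

/-- A (nonempty if `ι` is nonempty) real central arrangement of hyperplanes in `ℝ^ℓ`,
given by a family of nonzero defining linear forms with pairwise distinct kernels
(the hyperplanes `H j = ker (form j)`). -/
structure Arrangement (ℓ : ℕ) (ι : Type) [Fintype ι] where
  form : ι → ((Fin ℓ → ℝ) →ₗ[ℝ] ℝ)
  form_ne_zero : ∀ j, form j ≠ 0
  ker_injective : ∀ j k, LinearMap.ker (form j) = LinearMap.ker (form k) → j = k

namespace Arrangement

variable {ℓ : ℕ} {ι : Type} [Fintype ι]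

/-- The complement `ℝ^ℓ ∖ (H₁ ∪ ⋯ ∪ Hₙ)`. -/
def Complement (A : Arrangement ℓ ι) : Set (Fin ℓ → ℝ) :=
  {x | ∀ j, A.form j x ≠ 0}

/-- A chamber is a connected component of the complement. -/
def IsChamber (A : Arrangement ℓ ι) (C : Set (Fin ℓ → ℝ)) : Prop :=
  ∃ x ∈ A.Complement, C = connectedComponentIn A.Complement x

/-- The set (type) of chambers of the arrangement. -/
abbrev Ch (A : Arrangement ℓ ι) : Type := {C : Set (Fin ℓ → ℝ) // A.IsChamber C}

/-- `εⱼ^σ(C) = στ` when `C ⊆ Hⱼ^τ`; `B = {+,-}` is realized as `ℤˣ`, `+ = 1`, `- = -1`. -/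
def eps (A : Arrangement ℓ ι) (j : ι) (σ : ℤˣ) (C : A.Ch) : ℤˣ :=
  σ * (if ∀ x ∈ C.1, 0 < A.form j x then 1 else -1)

/-- `Φ : Ch^m → Ch` is admissible if there is a family `φⱼ^σ : B^m → B` with
`φⱼ^σ(+,…,+) = +` and `εⱼ^σ ∘ Φ = φⱼ^σ ∘ εⱼ^σ` (componentwise) for all `j, σ`. -/
def IsAdmissible (A : Arrangement ℓ ι) (m : ℕ) (Φ : (Fin m → A.Ch) → A.Ch) : Prop :=
  ∃ φ : ι → ℤˣ → ((Fin m → ℤˣ) → ℤˣ),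
    (∀ j σ, φ j σ (fun _ => 1) = 1) ∧
    ∀ j σ 𝒞, A.eps j σ (Φ 𝒞) = φ j σ (fun i => A.eps j σ (𝒞 i))

/-- `r(ℬ) = codim (⋂_{H ∈ ℬ} H)` for the subarrangement indexed by `S`. -/
def rnkOn (A : Arrangement ℓ ι) (S : Finset ι) : ℕ :=
  ℓ - Module.finrank ℝ ↥(⨅ j ∈ S, LinearMap.ker (A.form j))

/-- `r(𝒜)`. -/
def rnk (A : Arrangement ℓ ι) : ℕ := A.rnkOn Finset.univ

/-- The subarrangement indexed by `S` decomposes as a disjoint union of two nonempty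
subarrangements with additive rank. -/
def DecomposableOn (A : Arrangement ℓ ι) (S : Finset ι) : Prop :=
  ∃ S₁ S₂ : Finset ι, S₁.Nonempty ∧ S₂.Nonempty ∧ Disjoint S₁ S₂ ∧ S₁ ∪ S₂ = S ∧
    A.rnkOn S = A.rnkOn S₁ + A.rnkOn S₂

def IndecomposableOn (A : Arrangement ℓ ι) (S : Finset ι) : Prop := ¬ A.DecomposableOn S

def Decomposable (A : Arrangement ℓ ι) : Prop := A.DecomposableOn Finset.univ

def Indecomposable (A : Arrangement ℓ ι) : Prop := ¬ A.Decomposable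

/-- The subarrangement of `A` consisting of the hyperplanes indexed by `S`. -/
def restrict (A : Arrangement ℓ ι) (S : Finset ι) : Arrangement ℓ {j : ι // j ∈ S} where
  form := fun j => A.form j.1
  form_ne_zero := fun j => A.form_ne_zero j.1
  ker_injective := fun j k h => Subtype.ext (A.ker_injective j.1 k.1 h)

/-- A dependent subarrangement: `r(ℬ) < |ℬ|`. -/
def DependentOn (A : Arrangement ℓ ι) (S : Finset ι) : Prop := A.rnkOn S < S.card

/-- A circuit: a minimally dependent subarrangement. -/
def IsCircuitOn (A : Arrangement ℓ ι) (S : Finset ι) : Prop :=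
  A.DependentOn S ∧ ∀ T ⊂ S, ¬ A.DependentOn T

end Arrangement

open Function Set

section Elementary

variable {ι K M : Type*} [DivisionRing K] [AddCommGroup M] [Module K M]

/-- A nonzero vector of a subspace of `K^ι` is elementary if its support is minimal. The elementary
vectors of the space of linear relations of a family of vectors are the coefficient vectors of its
circuits. -/
def IsElementaryVector (V : Submodule K (ι → K)) (c : ι → K) : Prop :=
  MinimalFor (fun d ↦ d ∈ V ∧ d ≠ 0) support c

lemma support_sub_smul_ssubset {a b : ι → K} {s : Set ι} (ha : support a ⊆ s)
    (hb : support b ⊆ s) {i : ι} (hi : b i ≠ 0) : support (a - (a i / b i) • b) ⊂ s := by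
  refine (ssubset_iff_of_subset fun k hk ↦ ?_).2 ⟨i, hb hi, by simp [hi]⟩
  by_contra hks
  exact hk (by simp [notMem_support.1 (notMem_subset ha hks),
    notMem_support.1 (notMem_subset hb hks)])

lemma IsElementaryVector.exists_eq_smul {V : Submodule K (ι → K)} {c d : ι → K}
    (hc : IsElementaryVector V c) (hd : d ∈ V) (hdc : support d ⊆ support c) :
    ∃ t : K, d = t • c := by
  obtain ⟨i, hi⟩ := Function.ne_iff.1 hc.1.2
  refine ⟨d i / c i, sub_eq_zero.1 ?_⟩
  have hlt := support_sub_smul_ssubset hdc Subset.rfl hi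
  by_contra hne
  exact hc.not_prop_of_lt hlt ⟨V.sub_mem hd (V.smul_mem _ hc.1.1), hne⟩

theorem span_isElementaryVector [Finite ι] (V : Submodule K (ι → K)) :
    Submodule.span K {c | IsElementaryVector V c} = V := by
  refine le_antisymm (Submodule.span_le.2 fun c hc ↦ hc.1.1) fun c hc ↦ ?_
  induction hs : support c using WellFoundedLT.induction generalizing c with
  | ind s ih =>
    subst hs
    by_cases hmin : IsElementaryVector V c
    · exact Submodule.subset_span hmin
    obtain rfl | hc0 := eq_or_ne c 0
    · exact zero_mem _
    obtain ⟨d, ⟨hd, hd0⟩, hdc, hcd⟩ :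
        ∃ d, (d ∈ V ∧ d ≠ 0) ∧ support d ⊆ support c ∧ ¬ support c ⊆ support d := by
      by_contra! h
      exact hmin ⟨⟨hc, hc0⟩, h⟩
    obtain ⟨i, hi⟩ := Function.ne_iff.1 hd0
    have hsub := ih _ (support_sub_smul_ssubset Subset.rfl hdc hi)
      _ (V.sub_mem hc (V.smul_mem _ hd)) rfl
    have hd' := ih _ ⟨hdc, hcd⟩ d hd rfl
    simpa using add_mem hsub (Submodule.smul_mem _ (c i / d i) hd')

variable [Fintype ι]

lemma mem_span_image_iff_exists_support_subset {v : ι → M} {s : Set ι} {x : M} :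
    x ∈ Submodule.span K (v '' s) ↔
      ∃ c : ι → K, support c ⊆ s ∧ Fintype.linearCombination K v c = x := by
  rw [Finsupp.mem_span_image_iff_linearCombination,
    (Finsupp.linearEquivFunOnFinite K K ι).surjective.exists]
  refine exists_congr fun l ↦ ?_
  rw [Finsupp.mem_supported, ← Finsupp.fun_support_eq,
    ← Finsupp.linearCombination_eq_fintype_linearCombination_apply, LinearEquiv.symm_apply_apply]
  rfl

lemma disjoint_span_image_compl (v : ι → M) (s : Set ι)
    (h : ∀ c, IsElementaryVector (LinearMap.ker (Fintype.linearCombination K v)) c →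
      support c ⊆ s ∨ support c ⊆ sᶜ) :
    Disjoint (Submodule.span K (v '' s)) (Submodule.span K (v '' sᶜ)) := by
  let F := Fintype.linearCombination K (s.indicator v)
  have hFs : ∀ c : ι → K, support c ⊆ s → F c = Fintype.linearCombination K v c :=
    fun c hc ↦ Finset.sum_congr rfl fun i _ ↦ by
      by_cases hi : i ∈ s
      · rw [indicator_of_mem hi]
      · rw [notMem_support.1 (notMem_subset hc hi), zero_smul, zero_smul]
  have hFsc : ∀ c : ι → K, support c ⊆ sᶜ → F c = 0 :=
    fun c hc ↦ Finset.sum_eq_zero fun i _ ↦ by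
      by_cases hi : i ∈ s
      · rw [notMem_support.1 fun hci ↦ hc hci hi, zero_smul]
      · rw [indicator_of_notMem hi, smul_zero]
  have hker : LinearMap.ker (Fintype.linearCombination K v) ≤ LinearMap.ker F := by
    rw [← span_isElementaryVector (LinearMap.ker (Fintype.linearCombination K v)),
      Submodule.span_le]
    intro c hc
    obtain hcs | hcs := h c hc
    · exact (hFs c hcs).trans hc.1.1
    · exact hFsc c hcs
  refine Submodule.disjoint_def.2 fun x hxs hxsc ↦ ?_
  obtain ⟨a, has, hax⟩ := mem_span_image_iff_exists_support_subset.1 hxs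
  obtain ⟨b, hbs, hbx⟩ := mem_span_image_iff_exists_support_subset.1 hxsc
  have hab : F (a - b) = 0 := hker (by rw [LinearMap.mem_ker, map_sub, hax, hbx, sub_self])
  rwa [map_sub, hFs a has, hFsc b hbs, sub_zero, hax] at hab

lemma exists_ne_ne_of_linearCombination_eq_zero {v : ι → M}
    (hv : Pairwise fun j k ↦ LinearIndependent K ![v j, v k]) {c : ι → K}
    (hc : Fintype.linearCombination K v c = 0) (hc0 : c ≠ 0) {j k : ι} (hjk : j ≠ k) :
    ∃ l, c l ≠ 0 ∧ l ≠ j ∧ l ≠ k := by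
  by_contra! h
  have hl : ∀ l, l ≠ j ∧ l ≠ k → c l = 0 := fun l hl ↦ by
    by_contra hcl
    exact hl.2 (h l hcl hl.1)
  rw [Fintype.linearCombination_apply,
    Fintype.sum_eq_add j k hjk fun l hljk ↦ by rw [hl l hljk, zero_smul]] at hc
  obtain ⟨hj, hk⟩ := LinearIndependent.pair_iff.1 (hv hjk) _ _ hc
  refine hc0 (funext fun l ↦ ?_)
  by_cases hlj : l = j
  · rwa [hlj]
  by_cases hlk : l = k
  · rwa [hlk]
  exact hl l ⟨hlj, hlk⟩

end Elementary

section Sign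

variable {R : Type*}

/-- The sign of `a` as an element of `{+, -}`, realised as `ℤˣ`. The junk value at `0` is `-1`. -/
def unitSign [Zero R] [LT R] (a : R) : ℤˣ := if 0 < a then 1 else -1

lemma eventually_unitSign_eq [Zero R] [LinearOrder R] [TopologicalSpace R] [OrderTopology R]
    {a : R} (ha : a ≠ 0) : ∀ᶠ b in nhds a, unitSign b = unitSign a := by
  obtain h | h := ha.lt_or_gt
  · filter_upwards [gt_mem_nhds h] with b hb
    simp [unitSign, h.not_gt, hb.not_gt]
  · filter_upwards [lt_mem_nhds h] with b hb
    simp [unitSign, h, hb]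

variable [Ring R] [LinearOrder R] [IsStrictOrderedRing R] {a b : R}

lemma unitSign_eq_iff (ha : a ≠ 0) {u : ℤˣ} : unitSign a = u ↔ 0 < ((u : ℤ) : R) * a := by
  obtain rfl | rfl := Int.units_eq_one_or u <;> obtain ha | ha := ha.lt_or_gt <;>
    simp [unitSign, ha, ha.not_gt]

lemma unitSign_mul (ha : a ≠ 0) (hb : b ≠ 0) : unitSign (a * b) = unitSign a * unitSign b := by
  rw [unitSign_eq_iff (mul_ne_zero ha hb)]
  have h := mul_pos ((unitSign_eq_iff ha).1 rfl) ((unitSign_eq_iff hb).1 rfl)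
  rwa [(Int.cast_commute _ a).symm.mul_mul_mul_comm, ← Int.cast_mul, ← Units.val_mul] at h

lemma nontrivial_unitSign_image_support {ι : Type*} [Fintype ι] {a : ι → R}
    (hsum : ∑ i, a i = 0) (ha : a ≠ 0) : ((fun i ↦ unitSign (a i)) '' support a).Nontrivial := by
  obtain ⟨k, hk⟩ := Function.ne_iff.1 ha
  refine Set.not_subsingleton_iff.1 fun hconst ↦ ?_
  have hpos : ∀ i ∈ support a, 0 < ((unitSign (a k) : ℤ) : R) * a i := fun i hi ↦
    (unitSign_eq_iff hi).1 (hconst (mem_image_of_mem _ hi) (mem_image_of_mem _ hk))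
  have hsum_pos : 0 < ∑ i, ((unitSign (a k) : ℤ) : R) * a i :=
    Finset.sum_pos' (fun i _ ↦ by
      by_cases hi : a i = 0
      · simp [hi]
      · exact (hpos i hi).le) ⟨k, Finset.mem_univ k, hpos k hk⟩
  rw [← Finset.mul_sum, hsum, mul_zero] at hsum_pos
  exact hsum_pos.false

lemma exists_sum_eq_zero_of_nontrivial_image {ι : Type*} (s : Finset ι) {e : ι → ℤˣ}
    (he : (e '' s).Nontrivial) :
    ∃ w : ι → R, ∑ i ∈ s, w i = 0 ∧ ∀ i, w i ≠ 0 ∧ unitSign (w i) = e i := by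
  refine ⟨fun i ↦ ∑ k ∈ s, (((e i : ℤ) : R) - ((e k : ℤ) : R)), ?_, fun i ↦ ?_⟩
  · simp [Finset.sum_sub_distrib, Finset.mul_sum]
  have hpos : 0 < ((e i : ℤ) : R) * ∑ k ∈ s, (((e i : ℤ) : R) - ((e k : ℤ) : R)) := by
    rw [Finset.mul_sum]
    obtain ⟨_, ⟨k, hk, rfl⟩, hki⟩ := he.exists_ne (e i)
    refine Finset.sum_pos' (fun l _ ↦ ?_) ⟨k, hk, ?_⟩
    · obtain h | h := Int.units_eq_one_or (e i) <;> obtain h' | h' := Int.units_eq_one_or (e l) <;>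
        simp [h, h']
    · rw [Int.units_ne_iff_eq_neg.1 hki]
      obtain h | h := Int.units_eq_one_or (e i) <;> simp [h]
  have hne := right_ne_zero_of_mul hpos.ne'
  exact ⟨hne, (unitSign_eq_iff hne).2 hpos⟩

end Sign

lemma exists_forall_mem_apply_eq {ι K V : Type*} [Fintype ι] [Field K] [AddCommGroup V]
    [Module K V] (f : ι → Module.Dual K V) (s : Set ι) (y : ι → K)
    (h : ∀ d, support d ⊆ s → Fintype.linearCombination K f d = 0 → ∑ i, d i * y i = 0) :
    ∃ x, ∀ i ∈ s, f i x = y i := by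
  suffices hy : s.indicator y ∈ LinearMap.range (LinearMap.pi (s.indicator f)) by
    obtain ⟨x, hx⟩ := hy
    exact ⟨x, fun i hi ↦ by simpa [hi] using congrFun hx i⟩
  by_contra hy
  obtain ⟨g, hgy, hg⟩ := Submodule.exists_le_ker_of_notMem hy
  let b : ι → K := fun i ↦ g fun j ↦ if i = j then 1 else 0
  have hgb : ∀ v, g v = ∑ i, v i * b i := g.pi_apply_eq_sum_univ
  have hrel : Fintype.linearCombination K f (s.indicator b) = 0 := by
    ext x
    have hgx : ∑ i, s.indicator f i x * b i = 0 := (hgb _).symm.trans (hg ⟨x, rfl⟩)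
    rw [LinearMap.zero_apply, ← hgx, Fintype.linearCombination_apply, LinearMap.sum_apply]
    refine Finset.sum_congr rfl fun i _ ↦ ?_
    by_cases hi : i ∈ s <;> simp [hi, mul_comm]
  refine hgy ?_
  rw [hgb, ← h _ support_indicator_subset hrel]
  refine Finset.sum_congr rfl fun i _ ↦ ?_
  by_cases hi : i ∈ s <;> simp [hi, mul_comm]

lemma IsElementaryVector.exists_unitSign_mul_eq {ι K V : Type*} [Fintype ι] [Field K]
    [LinearOrder K] [IsStrictOrderedRing K] [AddCommGroup V] [Module K V]
    {f : ι → Module.Dual K V} {c : ι → K}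
    (hc : IsElementaryVector (LinearMap.ker (Fintype.linearCombination K f)) c) {e : ι → ℤˣ}
    (he : (e '' support c).Nontrivial) :
    ∃ x, ∀ i ∈ support c, f i x ≠ 0 ∧ unitSign (c i * f i x) = e i := by
  have hcoe : ((support c).toFinset : Set ι) = support c := coe_toFinset _
  obtain ⟨w, hw, hwe⟩ : ∃ w : ι → K, ∑ i ∈ (support c).toFinset, w i = 0 ∧
      ∀ i, w i ≠ 0 ∧ unitSign (w i) = e i :=
    exists_sum_eq_zero_of_nontrivial_image _ (hcoe.symm ▸ he)
  have hsum : ∑ i, c i * (w i / c i) = 0 := by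
    rw [← hw]
    refine (Finset.sum_subset_zero_on_sdiff (Finset.subset_univ _) (fun i hi ↦ ?_)
      fun i hi ↦ ?_).symm
    · simp [show c i = 0 by simpa using hi]
    · rw [mul_div_cancel₀ _ (mem_toFinset.1 hi)]
  obtain ⟨x, hx⟩ := exists_forall_mem_apply_eq f (support c) (fun i ↦ w i / c i) fun d hdc hd ↦ by
    obtain ⟨t, rfl⟩ := hc.exists_eq_smul hd hdc
    simp only [Pi.smul_apply, smul_eq_mul, mul_assoc, ← Finset.mul_sum, hsum, mul_zero]
  refine ⟨x, fun i hi ↦ ?_⟩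
  obtain ⟨hwi, hsign⟩ := hwe i
  rw [hx i hi, mul_div_cancel₀ _ hi]
  exact ⟨div_ne_zero hwi hi, hsign⟩

section PreservesNotAllEqual

variable {ι κ : Type*}

/-- The family `g` is a (multisorted) polymorphism of the relation "not all equal" on `s`: if no
column of the matrix `e` is constant on `s`, then neither is the column obtained by applying `g i`
to the row `e i`. -/
def PreservesNotAllEqual (s : Set ι) (g : ι → (κ → ℤˣ) → ℤˣ) : Prop :=
  ∀ e : ι → κ → ℤˣ, (∀ a, ((fun i ↦ e i a) '' s).Nontrivial) →
    ((fun i ↦ g i (e i)) '' s).Nontrivial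

variable {s : Set ι} {g : ι → (κ → ℤˣ) → ℤˣ}

lemma PreservesNotAllEqual.apply_neg (hg : PreservesNotAllEqual s g)
    (hconst : ∀ i ∈ s, ∀ ρ, g i (fun _ ↦ ρ) = ρ) {j k : ι} (hj : j ∈ s) (hk : k ∈ s) (hjk : j ≠ k)
    (x : κ → ℤˣ) : g k (-x) = -g j x := by
  refine Int.units_ne_iff_eq_neg.1 fun hgk ↦ ?_
  let e : ι → κ → ℤˣ := update (update (fun _ _ ↦ g j x) k (-x)) j x
  have hej : e j = x := update_self ..
  have hek : e k = -x := by simp [e, hjk.symm]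
  have he : ∀ i, i ≠ j → i ≠ k → e i = fun _ ↦ g j x := fun i hij hik ↦ by
    simp [e, hij, hik]
  have hcol : ∀ a, ((fun i ↦ e i a) '' s).Nontrivial := fun a ↦
    ⟨e j a, mem_image_of_mem _ hj, e k a, mem_image_of_mem _ hk, by
      rw [hej, hek]
      exact units_ne_neg_self _⟩
  obtain ⟨_, ⟨i, hi, rfl⟩, hne⟩ := (hg e hcol).exists_ne (g j x)
  apply hne
  beta_reduce
  by_cases hij : i = j
  · rw [hij, hej]
  by_cases hik : i = k
  · rw [hik, hek, hgk]
  rw [he i hij hik, hconst i hi]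

lemma PreservesNotAllEqual.eq (hg : PreservesNotAllEqual s g)
    (hconst : ∀ i ∈ s, ∀ ρ, g i (fun _ ↦ ρ) = ρ) (hs : ∀ j k, j ≠ k → ∃ l ∈ s, l ≠ j ∧ l ≠ k)
    {j k : ι} (hj : j ∈ s) (hk : k ∈ s) : g j = g k := by
  obtain rfl | hjk := eq_or_ne j k
  · rfl
  obtain ⟨l, hl, hlj, hlk⟩ := hs j k hjk
  funext x
  rw [← neg_inj, ← hg.apply_neg hconst hj hl hlj.symm, hg.apply_neg hconst hk hl hlk.symm]

lemma PreservesNotAllEqual.odd (hg : PreservesNotAllEqual s g)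
    (hconst : ∀ i ∈ s, ∀ ρ, g i (fun _ ↦ ρ) = ρ) (hs : ∀ j k, j ≠ k → ∃ l ∈ s, l ≠ j ∧ l ≠ k)
    {j k : ι} (hj : j ∈ s) (hk : k ∈ s) (hjk : j ≠ k) : (g j).Odd := fun x ↦ by
  rw [hg.eq hconst hs hj hk, hg.apply_neg hconst hj hk hjk, hg.eq hconst hs hj hk]

end PreservesNotAllEqual

namespace Arrangement

variable {ℓ : ℕ} {ι : Type} [Fintype ι]

lemma eps_eq_of_mem (A : Arrangement ℓ ι) (j : ι) (σ : ℤˣ) {C : A.Ch} {p : Fin ℓ → ℝ}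
    (hp : p ∈ C.1) : A.eps j σ C = σ * unitSign (A.form j p) := by
  obtain ⟨C, q, hq, rfl⟩ := C
  unfold eps unitSign
  congr 2
  refine propext ⟨fun h ↦ h p hp, fun h y hy ↦ ?_⟩
  by_contra! hle
  obtain ⟨z, hz, hz0⟩ := isPreconnected_connectedComponentIn.intermediate_value hy hp
    (A.form j).continuous_of_finiteDimensional.continuousOn ⟨hle, h.le⟩
  exact connectedComponentIn_subset _ _ hz j hz0

lemma exists_mem_complement_and_mem (A : Arrangement ℓ ι) (C : A.Ch) :
    ∃ p ∈ A.Complement, p ∈ C.1 := by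
  obtain ⟨C, p, hp, rfl⟩ := C
  exact ⟨p, hp, mem_connectedComponentIn hp⟩

lemma complement_nonempty (A : Arrangement ℓ ι) : A.Complement.Nonempty :=
  Module.Dual.exists_forall_ne_zero_of_forall_exists A.form fun j ↦
    DFunLike.ne_iff.1 (A.form_ne_zero j)

/-- The chamber is that of `x + t z`, with `z` in the complement and `t` small. -/
lemma exists_chamber_eps_eq (A : Arrangement ℓ ι) (x : Fin ℓ → ℝ) :
    ∃ C : A.Ch, ∀ j σ, A.form j x ≠ 0 → A.eps j σ C = σ * unitSign (A.form j x) := by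
  obtain ⟨z, hz⟩ := A.complement_nonempty
  have hlim : ∀ j, Filter.Tendsto (fun t : ℝ ↦ A.form j (x + t • z)) (nhdsWithin 0 {0}ᶜ)
      (nhds (A.form j x)) := fun j ↦ by
    have hcont : Continuous fun t : ℝ ↦ A.form j (x + t • z) :=
      (A.form j).continuous_of_finiteDimensional.comp (by fun_prop)
    simpa using (hcont.tendsto 0).mono_left nhdsWithin_le_nhds
  have hne : ∀ j, ∀ᶠ t in nhdsWithin (0 : ℝ) {0}ᶜ, A.form j (x + t • z) ≠ 0 := fun j ↦ by
    by_cases hj : A.form j x = 0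
    · filter_upwards [self_mem_nhdsWithin] with t ht
      simpa [hj] using ⟨ht, hz j⟩
    · exact (hlim j).eventually_ne hj
  have hsign : ∀ j, ∀ᶠ t in nhdsWithin (0 : ℝ) {0}ᶜ,
      A.form j x ≠ 0 → unitSign (A.form j (x + t • z)) = unitSign (A.form j x) :=
    fun j ↦ Filter.eventually_imp_distrib_left.2 fun hj ↦
      (hlim j).eventually (eventually_unitSign_eq hj)
  obtain ⟨t, hcompl, ht⟩ :=
    ((Filter.eventually_all.2 hne).and (Filter.eventually_all.2 hsign)).exists
  refine ⟨⟨_, x + t • z, hcompl, rfl⟩, fun j σ hj ↦ ?_⟩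
  rw [A.eps_eq_of_mem j σ (mem_connectedComponentIn (F := A.Complement) hcompl), ht j hj]

lemma eps_surjective (A : Arrangement ℓ ι) (j : ι) (σ : ℤˣ) : Surjective (A.eps j σ) := by
  intro τ
  obtain ⟨x, hx⟩ := LinearMap.surjective (A.form_ne_zero j) ((σ * τ : ℤˣ) : ℤ)
  have hx0 : A.form j x ≠ 0 := by simp [hx]
  obtain ⟨C, hC⟩ := A.exists_chamber_eps_eq x
  have hsign : unitSign (A.form j x) = σ * τ := by
    rw [unitSign_eq_iff hx0, hx, ← Int.cast_mul, ← Units.val_mul, Int.units_mul_self]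
    simp
  exact ⟨C, by rw [hC j σ hx0, hsign, ← mul_assoc, Int.units_mul_self, one_mul]⟩

lemma eps_neg (A : Arrangement ℓ ι) (j : ι) (σ : ℤˣ) (C : A.Ch) :
    A.eps j (-σ) C = -A.eps j σ C := neg_mul _ _

/-- The signed circuits of the arrangement, as the elementary vectors of the space of linear
relations between the defining forms; the circuit itself is the support of `c`. -/
def IsCircuitVector (A : Arrangement ℓ ι) (c : ι → ℝ) : Prop :=
  IsElementaryVector (LinearMap.ker (Fintype.linearCombination ℝ A.form)) c

lemma pairwise_linearIndependent_form (A : Arrangement ℓ ι) :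
    Pairwise fun j k ↦ LinearIndependent ℝ ![A.form j, A.form k] := by
  refine fun j k hjk ↦ (LinearIndependent.pair_iff' (A.form_ne_zero j)).2 fun r hr ↦ ?_
  have hr0 : r ≠ 0 := by
    rintro rfl
    exact A.form_ne_zero k (by rw [← hr, zero_smul])
  exact hjk (A.ker_injective j k (by rw [← hr, LinearMap.ker_smul _ _ hr0]))

lemma IsCircuitVector.exists_chamber_eps_eq {A : Arrangement ℓ ι} {c : ι → ℝ}
    (hc : A.IsCircuitVector c) {e : ι → ℤˣ} (he : (e '' support c).Nontrivial) :
    ∃ C : A.Ch, ∀ i ∈ support c, A.eps i (unitSign (c i)) C = e i := by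
  obtain ⟨x, hx⟩ := hc.exists_unitSign_mul_eq he
  obtain ⟨C, hC⟩ := A.exists_chamber_eps_eq x
  refine ⟨C, fun i hi ↦ ?_⟩
  obtain ⟨hxi, hsign⟩ := hx i hi
  rw [hC i _ hxi, ← unitSign_mul hi hxi, hsign]

lemma nontrivial_eps_image_support {A : Arrangement ℓ ι} {c : ι → ℝ}
    (hc : Fintype.linearCombination ℝ A.form c = 0) (hc0 : c ≠ 0) (C : A.Ch) :
    ((fun i ↦ A.eps i (unitSign (c i)) C) '' support c).Nontrivial := by
  obtain ⟨p, hp, hpC⟩ := A.exists_mem_complement_and_mem C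
  have hsupp : support (fun i ↦ c i * A.form i p) = support c := by
    ext i
    simp [hp i]
  have hsum : ∑ i, c i * A.form i p = 0 := by
    simpa [Fintype.linearCombination_apply] using DFunLike.congr_fun hc p
  have hnt := nontrivial_unitSign_image_support hsum (support_nonempty_iff.1
    (hsupp ▸ support_nonempty_iff.2 hc0))
  rw [hsupp] at hnt
  convert hnt using 1
  exact image_congr fun i hi ↦ by rw [A.eps_eq_of_mem i _ hpC, unitSign_mul hi (hp i)]

lemma rnkOn_eq_finrank_span (A : Arrangement ℓ ι) (S : Finset ι) :
    A.rnkOn S = Module.finrank ℝ (Submodule.span ℝ (A.form '' S)) := by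
  have hker : (⨅ j ∈ S, LinearMap.ker (A.form j)) =
      (Submodule.span ℝ (A.form '' S)).dualCoannihilator := by
    apply SetLike.coe_injective
    rw [Submodule.coe_dualCoannihilator_span]
    ext x
    simp
  have hadd := Subspace.finrank_add_finrank_dualCoannihilator_eq (Submodule.span ℝ (A.form '' S))
  rw [Module.finrank_fin_fun] at hadd
  rw [rnkOn, hker]
  exact Nat.sub_eq_of_eq_add hadd.symm

lemma Indecomposable.not_disjoint_span {A : Arrangement ℓ ι} (hA : A.Indecomposable)
    {S : Finset ι} (hS : S.Nonempty) (hSc : Sᶜ.Nonempty) :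
    ¬ Disjoint (Submodule.span ℝ (A.form '' S)) (Submodule.span ℝ (A.form '' (S : Set ι)ᶜ)) := by
  refine fun hdisj ↦ hA ⟨S, Sᶜ, hS, hSc, disjoint_compl_right, Finset.union_compl S, ?_⟩
  have hfinrank := Submodule.finrank_sup_add_finrank_inf_eq (Submodule.span ℝ (A.form '' S))
    (Submodule.span ℝ (A.form '' (S : Set ι)ᶜ))
  rw [hdisj.eq_bot, finrank_bot, add_zero, ← Submodule.span_union, ← image_union,
    union_compl_self] at hfinrank
  rw [rnkOn_eq_finrank_span, rnkOn_eq_finrank_span, rnkOn_eq_finrank_span, Finset.coe_univ,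
    Finset.coe_compl, hfinrank]

lemma Indecomposable.exists_isCircuitVector {A : Arrangement ℓ ι} (hA : A.Indecomposable)
    {S : Finset ι} (hS : S.Nonempty) (hSc : Sᶜ.Nonempty) :
    ∃ c, A.IsCircuitVector c ∧ (∃ j ∈ S, c j ≠ 0) ∧ ∃ k ∉ S, c k ≠ 0 := by
  by_contra! h
  refine hA.not_disjoint_span hS hSc (disjoint_span_image_compl A.form S fun c hc ↦ ?_)
  by_cases hcS : ∃ j ∈ S, c j ≠ 0
  · exact .inl fun k hk ↦ by_contra fun hkS ↦ hk (h c hc hcS k hkS)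
  · exact .inr fun k hk hkS ↦ hcS ⟨k, hkS, hk⟩

/-- `φ` is the family of maps `φⱼ^σ : B^κ → B` witnessing that `Φ : Ch^κ → Ch` is admissible, for an
arbitrary index type `κ` in place of `{1, …, m}`. -/
structure IsAssociatedFamily (A : Arrangement ℓ ι) {κ : Type*} (Φ : (κ → A.Ch) → A.Ch)
    (φ : ι → ℤˣ → (κ → ℤˣ) → ℤˣ) : Prop where
  apply_one : ∀ j σ, φ j σ (fun _ ↦ 1) = 1
  eps_apply : ∀ j σ 𝒞, A.eps j σ (Φ 𝒞) = φ j σ (fun a ↦ A.eps j σ (𝒞 a))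

namespace IsAssociatedFamily

variable {A : Arrangement ℓ ι} {κ : Type*} {Φ : (κ → A.Ch) → A.Ch} {φ : ι → ℤˣ → (κ → ℤˣ) → ℤˣ}

lemma neg_sign_apply (hφ : A.IsAssociatedFamily Φ φ) (j : ι) (σ : ℤˣ) (x : κ → ℤˣ) :
    φ j (-σ) x = -φ j σ (-x) := by
  choose 𝒞 h𝒞 using fun a ↦ A.eps_surjective j (-σ) (x a)
  calc φ j (-σ) x = A.eps j (-σ) (Φ 𝒞) := by simp only [hφ.eps_apply, h𝒞]
    _ = -φ j σ (fun a ↦ A.eps j σ (𝒞 a)) := by rw [eps_neg, hφ.eps_apply]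
    _ = -φ j σ (-x) := by
      congr 2
      funext a
      rw [Pi.neg_apply, ← h𝒞 a, eps_neg, neg_neg]

lemma apply_const (hφ : A.IsAssociatedFamily Φ φ) (j : ι) (σ ρ : ℤˣ) :
    φ j σ (fun _ ↦ ρ) = ρ := by
  obtain rfl | rfl := Int.units_eq_one_or ρ
  · exact hφ.apply_one j σ
  · have h := hφ.neg_sign_apply j (-σ) (fun _ ↦ -1)
    rwa [neg_neg, show -(fun _ ↦ -1 : κ → ℤˣ) = fun _ ↦ 1 from funext fun _ ↦ neg_neg 1,
      hφ.apply_one] at h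

lemma preservesNotAllEqual (hφ : A.IsAssociatedFamily Φ φ) {c : ι → ℝ}
    (hc : A.IsCircuitVector c) :
    PreservesNotAllEqual (support c) (fun i ↦ φ i (unitSign (c i))) := by
  intro e he
  choose 𝒞 h𝒞 using fun a ↦ hc.exists_chamber_eps_eq (he a)
  have hnt := nontrivial_eps_image_support hc.1.1 hc.1.2 (Φ 𝒞)
  convert hnt using 1
  exact image_congr fun i hi ↦ by simp only [hφ.eps_apply, h𝒞 _ i hi]

lemma eq_of_odd (hφ : A.IsAssociatedFamily Φ φ) {j : ι} {σ : ℤˣ} (hodd : (φ j σ).Odd) (τ : ℤˣ) :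
    φ j τ = φ j σ := by
  obtain rfl | hτ := eq_or_ne τ σ
  · rfl
  · funext x
    rw [Int.units_ne_iff_eq_neg.1 hτ, hφ.neg_sign_apply, hodd, neg_neg]

lemma eq_of_isCircuitVector (hφ : A.IsAssociatedFamily Φ φ) {c : ι → ℝ}
    (hc : A.IsCircuitVector c) {j k : ι} (hjk : j ≠ k) (hj : c j ≠ 0) (hk : c k ≠ 0) (σ τ : ℤˣ) :
    φ j σ = φ k τ := by
  have hpres := hφ.preservesNotAllEqual hc
  have hconst : ∀ i ∈ support c, ∀ ρ, φ i (unitSign (c i)) (fun _ ↦ ρ) = ρ :=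
    fun i _ ↦ hφ.apply_const i _
  have hthird : ∀ a b, a ≠ b → ∃ l ∈ support c, l ≠ a ∧ l ≠ b := fun a b ↦
    exists_ne_ne_of_linearCombination_eq_zero A.pairwise_linearIndependent_form hc.1.1 hc.1.2
  calc φ j σ = φ j (unitSign (c j)) :=
        hφ.eq_of_odd (hpres.odd hconst hthird hj hk hjk) σ
    _ = φ k (unitSign (c k)) := hpres.eq hconst hthird hj hk
    _ = φ k τ := (hφ.eq_of_odd (hpres.odd hconst hthird hk hj hjk.symm) τ).symm

end IsAssociatedFamily

end Arrangement

theorem phi_independent_general {ℓ : ℕ} {ι : Type} [Fintype ι] [Nontrivial ι]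
    {A : Arrangement ℓ ι} (hA : A.Indecomposable) {κ : Type*} {Φ : (κ → A.Ch) → A.Ch}
    {φ : ι → ℤˣ → (κ → ℤˣ) → ℤˣ} (hφ : A.IsAssociatedFamily Φ φ) (j₁ j₂ : ι) (σ₁ σ₂ : ℤˣ) :
    φ j₁ σ₁ = φ j₂ σ₂ := by
  let S : Finset ι := {k | ∀ τ, φ k τ = φ j₁ σ₁}
  have hS : S.Nonempty := by
    obtain ⟨i, hi⟩ := exists_ne j₁
    obtain ⟨c, hc, ⟨j, hj, hcj⟩, k, hk, hck⟩ :=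
      hA.exists_isCircuitVector (S := {j₁}) ⟨j₁, by simp⟩ ⟨i, by simpa using hi⟩
    obtain rfl := Finset.mem_singleton.1 hj
    have hkj : k ≠ j := fun h ↦ hk (Finset.mem_singleton.2 h)
    exact ⟨k, by simpa [S] using fun τ ↦ hφ.eq_of_isCircuitVector hc hkj hck hcj τ σ₁⟩
  suffices hSuniv : S = Finset.univ by
    have hj₂ : j₂ ∈ S := hSuniv ▸ Finset.mem_univ j₂
    exact ((Finset.mem_filter.1 hj₂).2 σ₂).symm
  by_contra hne
  obtain ⟨c, hc, ⟨j, hj, hcj⟩, k, hk, hck⟩ := hA.exists_isCircuitVector hS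
    (Finset.nonempty_iff_ne_empty.2 (Finset.compl_eq_empty_iff S |>.not.2 hne))
  have hkj : k ≠ j := fun h ↦ hk (h ▸ hj)
  refine hk (Finset.mem_filter.2 ⟨Finset.mem_univ k, fun τ ↦ ?_⟩)
  rw [hφ.eq_of_isCircuitVector hc hkj hck hcj τ 1, (Finset.mem_filter.1 hj).2 1]

/-- **Lemma.** If `𝒜` is indecomposable with `|𝒜| ≥ 3` and `Φ` is admissible with associated
family `φⱼ^σ`, then the maps `φⱼ^σ` do not depend on `j` or `σ`. -/
theorem phi_independent {ℓ : ℕ} {ι : Type} [Fintype ι] (A : Arrangement ℓ ι)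
    (hA : A.Indecomposable) (hcard : 3 ≤ Fintype.card ι)
    (m : ℕ) (hm : 0 < m)
    (Φ : (Fin m → A.Ch) → A.Ch)
    (φ : ι → ℤˣ → (Fin m → ℤˣ) → ℤˣ)
    (hunit : ∀ j σ, φ j σ (fun _ => 1) = 1)
    (hcomm : ∀ j σ 𝒞, A.eps j σ (Φ 𝒞) = φ j σ (fun i => A.eps j σ (𝒞 i))) :
    ∀ (j₁ j₂ : ι) (σ₁ σ₂ : ℤˣ), φ j₁ σ₁ = φ j₂ σ₂ := by
  have : Nontrivial ι := Fintype.one_lt_card_iff_nontrivial.1 (by lia)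
  exact phi_independent_general hA ⟨hunit, hcomm⟩
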